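/- For every integer n ≥ 3, the Tasaki matrix T^n_3 is given by T(n,3,0,0) = c·(2n−3), T(n,3,0,1) = T(n,3,1,0) = −c, and T(n,3,1,1) = c·(2n−1)/3, where c := 2^{n−2}·(n−3)!/(n·π·(2n−3)!!). -/

import Mathlib

/-- `ω m` is the volume of the `m`-dimensional unit euclidean ball: `π^(m/2)/Γ(m/2+1)`. -/
noncomputable def ω (m : ℕ) : ℝ :=
  Real.pi ^ ((m : ℝ) / 2) / Real.Gamma ((m : ℝ) / 2 + 1)

/-- The `(i,j)` entry of the Tasaki matrix `T^n_k`: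
`T(n,k,i,j) = (-1)^(i+j) ⬝ (ω_k ω_{2n-k} / πⁿ) ⬝ ∑_{r = max(i,j)}^{⌊k/2⌋} [⋯]`.
All inner subtractions are natural-number subtractions, which agree with the integer
values in the intended range `k ≤ n`, `i, j ≤ ⌊k/2⌋`; the truncation `(2r-2i-1)‼` for
`i = r` gives `0‼ = 1`, matching the convention `(-1)‼ = 1`. -/
noncomputable def T (n k i j : ℕ) : ℝ :=
  (-1 : ℝ) ^ (i + j) * (ω k * ω (2 * n - k) / Real.pi ^ n) *
    ∑ r ∈ Finset.Icc (max i j) (k / 2),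
      (1 / (n.choose (2 * r) : ℝ)) *
        (((2 * n - 2 * r - k).factorial * (n - r).factorial * (k - 2 * i).factorial *
            (k - 2 * j).factorial : ℕ) : ℝ) /
        ((8 ^ r * (k - 2 * r).factorial * (2 * n - 4 * r).factorial *
            (2 * r - 2 * i).factorial * (2 * r - 2 * j).factorial : ℕ) : ℝ) *
        ((Nat.doubleFactorial (2 * n - 2 * r + 1) * Nat.doubleFactorial (2 * n - 4 * r + 1) *
            Nat.doubleFactorial (2 * r - 2 * i - 1) *
            Nat.doubleFactorial (2 * r - 2 * j - 1) : ℕ) : ℝ) /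
        ((Nat.doubleFactorial (2 * n - 2 * r - 2 * i + 1) *
            Nat.doubleFactorial (2 * n - 2 * r - 2 * j + 1) : ℕ) : ℝ)

lemma omega_odd (k : ℕ) : ω (2 * k + 1) =
    Real.pi ^ k * 2 ^ (k + 1) / (Nat.doubleFactorial (2 * k + 1) : ℝ) := by
  unfold ω
  have h1 : ((2 * k + 1 : ℕ) : ℝ) / 2 + 1 = (k : ℝ) + 1 + 1 / 2 := by push_cast; ring
  have h2 : ((2 * k + 1 : ℕ) : ℝ) / 2 = (k : ℝ) + 1 / 2 := by push_cast; ring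
  have hp := Real.pi_pos
  have hs : Real.sqrt Real.pi ≠ 0 := by positivity
  rw [h1, h2, Real.Gamma_nat_add_one_add_half, Real.rpow_add hp, Real.rpow_natCast,
    ← Real.sqrt_eq_rpow]
  have hd : (Nat.doubleFactorial (2 * k + 1) : ℝ) ≠ 0 := by
    exact_mod_cast (Nat.doubleFactorial_pos _).ne'
  field_simp

lemma prefactor (m : ℕ) : ω 3 * ω (2 * (m + 3) - 3) / Real.pi ^ (m + 3) =
    4 / 3 * 2 ^ (m + 2) / (Real.pi * (Nat.doubleFactorial (2 * m + 3) : ℝ)) := by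
  have e : 2 * (m + 3) - 3 = 2 * (m + 1) + 1 := by omega
  have e3 : ω 3 = _ := omega_odd 1
  rw [e, e3, omega_odd, show 2 * (m + 1) + 1 = 2 * m + 3 by ring]
  have hd : (Nat.doubleFactorial (2 * m + 3) : ℝ) ≠ 0 := by
    exact_mod_cast (Nat.doubleFactorial_pos _).ne'
  have hp := Real.pi_pos.ne'
  have h3 : Nat.doubleFactorial (2 * 1 + 1) = 3 := by decide
  rw [h3]
  push_cast
  field_simp
  ring

theorem stmt18 (n : ℕ) (hn : 3 ≤ n) :
    T n 3 0 0 =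
      (2 ^ (n - 2) * ((n - 3).factorial : ℝ) /
        (n * Real.pi * (Nat.doubleFactorial (2 * n - 3) : ℝ))) * (2 * (n : ℝ) - 3) ∧
    T n 3 0 1 =
      -(2 ^ (n - 2) * ((n - 3).factorial : ℝ) /
        (n * Real.pi * (Nat.doubleFactorial (2 * n - 3) : ℝ))) ∧
    T n 3 1 0 =
      -(2 ^ (n - 2) * ((n - 3).factorial : ℝ) /
        (n * Real.pi * (Nat.doubleFactorial (2 * n - 3) : ℝ))) ∧
    T n 3 1 1 =
      (2 ^ (n - 2) * ((n - 3).factorial : ℝ) /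
        (n * Real.pi * (Nat.doubleFactorial (2 * n - 3) : ℝ))) * (2 * (n : ℝ) - 1) / 3 := by
  obtain ⟨m, rfl⟩ : ∃ m, n = m + 3 := ⟨n - 3, by omega⟩
  have hd : (Nat.doubleFactorial (2 * m + 3) : ℝ) ≠ 0 := by
    exact_mod_cast (Nat.doubleFactorial_pos _).ne'
  have hp := Real.pi_pos.ne'
  have hf : (Nat.factorial m : ℝ) ≠ 0 := by exact_mod_cast (Nat.factorial_pos _).ne'
  have hg : (Nat.factorial (2 * m + 1) : ℝ) ≠ 0 := by exact_mod_cast (Nat.factorial_pos _).ne'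
  have hc : ((m + 3).choose 2 : ℝ) = (m + 3) * (m + 2) / 2 := by
    rw [Nat.cast_choose_two]; push_cast; ring
  have f2 : (m + 2).factorial = (m + 2) * ((m + 1) * m.factorial) := by
    simp [Nat.factorial_succ]
  have f3 : (m + 3).factorial = (m + 3) * ((m + 2) * ((m + 1) * m.factorial)) := by
    simp [Nat.factorial_succ]
  have g2 : (2 * m + 2).factorial = (2 * m + 2) * (2 * m + 1).factorial := by
    simp [Nat.factorial_succ]
  have g3 : (2 * m + 3).factorial = (2 * m + 3) * ((2 * m + 2) * (2 * m + 1).factorial) := by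
    simp [Nat.factorial_succ]
  have g6 : (2 * m + 6).factorial = (2 * m + 6) * ((2 * m + 5) * ((2 * m + 4) *
      ((2 * m + 3) * ((2 * m + 2) * (2 * m + 1).factorial)))) := by
    simp [Nat.factorial_succ]
  have d5 : Nat.doubleFactorial (2 * m + 5) = (2 * m + 5) * Nat.doubleFactorial (2 * m + 3) :=
    Nat.doubleFactorial_add_two _
  have d7 : Nat.doubleFactorial (2 * m + 7) =
      (2 * m + 7) * ((2 * m + 5) * Nat.doubleFactorial (2 * m + 3)) := by
    rw [← d5]; exact Nat.doubleFactorial_add_two _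
  have s1 : 2 * (m + 3) - 2 * 1 - 3 = 2 * m + 1 := by omega
  have s2 : 2 * (m + 3) - 4 * 1 = 2 * m + 2 := by omega
  have s3 : 2 * (m + 3) - 2 * 1 = 2 * m + 4 := by omega
  have s4 : 2 * m + 4 - 2 * 1 = 2 * m + 2 := by omega
  have s5 : 2 * (m + 3) - 3 = 2 * m + 3 := by omega
  have s6 : m + 3 - 1 = m + 2 := by omega
  have s7 : m + 3 - 2 = m + 1 := by omega
  have s8 : 2 * (m + 3) = 2 * m + 6 := by omega
  have i0 : Finset.Icc (max 0 0) (3 / 2) = {0, 1} := by decide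
  have i1 : Finset.Icc (max 0 1) (3 / 2) = {1} := by decide
  have i2 : Finset.Icc (max 1 0) (3 / 2) = {1} := by decide
  have i3 : Finset.Icc (max 1 1) (3 / 2) = {1} := by decide
  have q1 : (2 * (m : ℝ) + 5) ≠ 0 := by positivity
  have q2 : (2 * (m : ℝ) + 7) ≠ 0 := by positivity
  have q3 : (2 * (m : ℝ) + 3) ≠ 0 := by positivity
  have d1 : Nat.doubleFactorial 1 = 1 := rfl
  have d0 : Nat.doubleFactorial 0 = 1 := rfl
  have k3 : Nat.factorial 3 = 6 := rfl
  have t0 : 2 * m + 6 - 3 = 2 * m + 3 := by omega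
  refine ⟨?_, ?_, ?_, ?_⟩ <;> unfold T <;> rw [prefactor]
  · rw [i0, Finset.sum_pair (by decide)]
    simp only [s1, s2, s3, s4, s5, s6, s7, mul_zero, Nat.sub_zero, mul_one, Nat.zero_sub]
    simp only [s8, t0, Nat.add_sub_cancel, Nat.add_assoc, Nat.reduceAdd, Nat.reduceSub, hc, f2, f3,
      g2, g3, g6, d5, d7, d1, d0, k3, Nat.factorial_two, Nat.factorial_zero, Nat.factorial_one,
      Nat.choose_zero_right]
    push_cast
    field_simp
    ring
  all_goals
    simp only [i1, i2, i3, Finset.sum_singleton]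
    simp only [s1, s2, s3, s4, s5, s6, s7, mul_zero, Nat.sub_zero, mul_one, Nat.zero_sub]
    simp only [s8, t0, Nat.add_sub_cancel, Nat.add_assoc, Nat.reduceAdd, Nat.reduceSub, hc, f2, f3,
      g2, g3, g6, d5, d7, d1, d0, k3, Nat.factorial_two, Nat.factorial_zero, Nat.factorial_one,
      Nat.choose_zero_right]
    push_cast
    field_simp
    ring
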